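/- arXiv:2507.02540 — 2 statements merged into one kernel-verified Lean document; each statement's English description precedes it below -/
import Mathlib

section
/- The purity of the ancilla marginal also encodes the α-Stabilizer Rényi quantity: for every natural number n, every integer α ≥ 1, and every unit vector ψ : (Fin n → Fin 2) → ℂ, letting χ be the matrix indexed by (Fin n → Fin 4) with entries χ i j = Σ over all f : Fin α → Fin n → Fin 2 of ψ'_α (i, f) · conj(ψ'_α (j, f)), one has Re( trace(χ * χ) ) = d⁻¹ · A_α(ψ), where d = 2^n. -/
open Complex Matrix BigOperators

/-- The single-qubit Pauli matrices `Q₀ = 1`, `Q₁ = X`, `Q₂ = Y`, `Q₃ = Z`. -/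
noncomputable def Q : Fin 4 → Matrix (Fin 2) (Fin 2) ℂ :=
  ![1, !![0, 1; 1, 0], !![0, -Complex.I; Complex.I, 0], !![1, 0; 0, -1]]

/-- The `n`-qubit Pauli string `P_s`, the Kronecker product of the `Q (s k)`. -/
noncomputable def P {n : ℕ} (s : Fin n → Fin 4) :
    Matrix (Fin n → Fin 2) (Fin n → Fin 2) ℂ :=
  Matrix.of fun i j => ∏ k, Q (s k) (i k) (j k)


/-- `A_α(ψ) = d⁻¹ ∑_s ⟨ψ, P_s ψ⟩^(2α)` with `d = 2^n`. -/
noncomputable def A (n α : ℕ) (ψ : (Fin n → Fin 2) → ℂ) : ℝ :=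
  (2 ^ n : ℝ)⁻¹ * ∑ s : Fin n → Fin 4, (star ψ ⬝ᵥ (P s).mulVec ψ).re ^ (2 * α)


/-- The purified state `ψ′_α = d⁻¹ ∑_t |t⟩ ⊗ (P_t ψ)^⊗α`. -/
noncomputable def psi' (n α : ℕ) (ψ : (Fin n → Fin 2) → ℂ) :
    (Fin n → Fin 4) × (Fin α → Fin n → Fin 2) → ℂ :=
  fun p => (2 ^ n : ℂ)⁻¹ * ∏ m, (P p.1).mulVec ψ (p.2 m)


/-- Ancilla marginal of the purified state. -/
noncomputable def chi (n α : ℕ) (ψ : (Fin n → Fin 2) → ℂ) :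
    Matrix (Fin n → Fin 4) (Fin n → Fin 4) ℂ :=
  Matrix.of fun i j => ∑ f : Fin α → Fin n → Fin 2,
    psi' n α ψ (i, f) * (starRingEnd ℂ) (psi' n α ψ (j, f))

def pauliMul : Fin 4 → Fin 4 → Fin 4 :=
  ![![0, 1, 2, 3], ![1, 0, 3, 2], ![2, 3, 0, 1], ![3, 2, 1, 0]]

lemma pauliMul_invol (a b : Fin 4) : pauliMul a (pauliMul a b) = b := by
  revert a b; decide

lemma Q_mul_Q (a b : Fin 4) : ∃ c : ℂ, (starRingEnd ℂ) c * c = 1 ∧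
    ∀ x y, ∑ z, Q a x z * Q b z y = c * Q (pauliMul a b) x y := by
  have h1 : ∀ c : ℂ, (∀ x y, ∑ z, Q a x z * Q b z y = c * Q (pauliMul a b) x y) →
    (starRingEnd ℂ) c * c = 1 → ∃ c : ℂ, (starRingEnd ℂ) c * c = 1 ∧
    ∀ x y, ∑ z, Q a x z * Q b z y = c * Q (pauliMul a b) x y := fun c h h' => ⟨c, h', h⟩
  fin_cases a <;> fin_cases b <;>
  first
  | (refine h1 1 ?_ (by simp); intro x y; fin_cases x <;> fin_cases y <;> simp [Q, pauliMul] <;> done)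
  | (refine h1 Complex.I ?_ (by simp); intro x y; fin_cases x <;> fin_cases y <;> simp [Q, pauliMul] <;> done)
  | (refine h1 (-Complex.I) ?_ (by simp); intro x y; fin_cases x <;> fin_cases y <;> simp [Q, pauliMul] <;> done)

lemma Q_herm (a : Fin 4) (x y : Fin 2) : star (Q a y x) = Q a x y := by
  fin_cases a <;> fin_cases x <;> fin_cases y <;> simp [Q]

lemma P_herm {n : ℕ} (s : Fin n → Fin 4) : (P s)ᴴ = P s := by
  ext i j
  simp only [Matrix.conjTranspose_apply, P, Matrix.of_apply, star_prod, Q_herm]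

lemma P_mul_P {n : ℕ} (s t : Fin n → Fin 4) : ∃ c : ℂ, (starRingEnd ℂ) c * c = 1 ∧
    P s * P t = c • P (fun k => pauliMul (s k) (t k)) := by
  choose c hc h using fun k => Q_mul_Q (s k) (t k)
  refine ⟨∏ k, c k, ?_, ?_⟩
  · rw [map_prod, ← Finset.prod_mul_distrib]
    exact Finset.prod_eq_one fun k _ => hc k
  · ext i j
    simp only [Matrix.mul_apply, P, Matrix.of_apply, Matrix.smul_apply, smul_eq_mul,
      ← Finset.prod_mul_distrib, ← h]
    rw [Fintype.prod_sum]

lemma e_real {n : ℕ} (s : Fin n → Fin 4) (ψ : (Fin n → Fin 2) → ℂ) :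
    star ψ ⬝ᵥ (P s).mulVec ψ = ((star ψ ⬝ᵥ (P s).mulVec ψ).re : ℂ) := by
  symm
  rw [← Complex.conj_eq_iff_re]
  change star (star ψ ⬝ᵥ (P s).mulVec ψ) = _
  rw [← Matrix.star_dotProduct, Matrix.star_mulVec, P_herm, Matrix.dotProduct_mulVec]

lemma chi_eq (n α : ℕ) (ψ : (Fin n → Fin 2) → ℂ) (i j : Fin n → Fin 4) :
    chi n α ψ i j = ((2 ^ n : ℂ)⁻¹) ^ 2 * (star ψ ⬝ᵥ (P j * P i).mulVec ψ) ^ α := by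
  have h : star ψ ⬝ᵥ (P j * P i).mulVec ψ
      = ∑ x, (P i).mulVec ψ x * (starRingEnd ℂ) ((P j).mulVec ψ x) := by
    rw [← Matrix.mulVec_mulVec, Matrix.dotProduct_mulVec]
    conv_lhs => rw [← P_herm j]
    rw [← Matrix.star_mulVec, dotProduct_comm]
    rfl
  rw [h, Fintype.sum_pow, Finset.mul_sum]
  simp only [chi, Matrix.of_apply, psi', map_mul, map_prod, Finset.prod_mul_distrib, map_inv₀,
    map_pow, Complex.conj_ofNat]
  refine Finset.sum_congr rfl fun f _ => ?_
  ring

lemma chi_herm (n α : ℕ) (ψ : (Fin n → Fin 2) → ℂ) (i j : Fin n → Fin 4) :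
    chi n α ψ j i = (starRingEnd ℂ) (chi n α ψ i j) := by
  simp [chi, mul_comm]

lemma chi_mul (n α : ℕ) (ψ : (Fin n → Fin 2) → ℂ) (i j : Fin n → Fin 4) :
    chi n α ψ j i * chi n α ψ i j = (((2 ^ n : ℝ)⁻¹) ^ 4 *
      (star ψ ⬝ᵥ (P (fun k => pauliMul (j k) (i k))).mulVec ψ).re ^ (2 * α) : ℝ) := by
  obtain ⟨c, hc, h⟩ := P_mul_P j i
  rw [chi_herm, chi_eq, h, Matrix.smul_mulVec, dotProduct_smul, e_real]
  set r := (star ψ ⬝ᵥ (P (fun k => pauliMul (j k) (i k))).mulVec ψ).re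
  simp only [smul_eq_mul, map_mul, map_pow, map_inv₀, Complex.conj_ofNat, Complex.conj_ofReal,
    mul_pow]
  push_cast
  calc _ = ((2 ^ n : ℂ)⁻¹) ^ 4 * ((starRingEnd ℂ) c * c) ^ α * (r : ℂ) ^ (2 * α) := by ring
    _ = _ := by rw [hc]; simp

theorem ancilla_purity_encodes_A (n α : ℕ) (hα : 1 ≤ α) (ψ : (Fin n → Fin 2) → ℂ)
    (hψ : star ψ ⬝ᵥ ψ = 1) :
    ((chi n α ψ * chi n α ψ).trace).re = (2 ^ n : ℝ)⁻¹ * A n α ψ := by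
  have key : (chi n α ψ * chi n α ψ).trace = ((∑ j : Fin n → Fin 4, ∑ i : Fin n → Fin 4,
      ((2 ^ n : ℝ)⁻¹) ^ 4 *
      (star ψ ⬝ᵥ (P (fun k => pauliMul (j k) (i k))).mulVec ψ).re ^ (2 * α) : ℝ) : ℂ) := by
    simp only [Matrix.trace, Matrix.diag_apply, Matrix.mul_apply, chi_mul]
    push_cast
    rfl
  rw [key, Complex.ofReal_re]
  have perm : ∀ j : Fin n → Fin 4, ∑ i : Fin n → Fin 4, ((2 ^ n : ℝ)⁻¹) ^ 4 *
      (star ψ ⬝ᵥ (P (fun k => pauliMul (j k) (i k))).mulVec ψ).re ^ (2 * α)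
      = ∑ s : Fin n → Fin 4, ((2 ^ n : ℝ)⁻¹) ^ 4 *
        (star ψ ⬝ᵥ (P s).mulVec ψ).re ^ (2 * α) := by
    intro j
    have hinv : Function.Involutive
        (fun (i : Fin n → Fin 4) => fun k => pauliMul (j k) (i k)) := by
      intro i
      funext k
      exact pauliMul_invol _ _
    exact Equiv.sum_comp hinv.toPerm (fun s => ((2 ^ n : ℝ)⁻¹) ^ 4 *
        (star ψ ⬝ᵥ (P s).mulVec ψ).re ^ (2 * α))
  simp only [perm, ← Finset.mul_sum, A, Finset.sum_const, Finset.card_univ, Fintype.card_pi,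
    Fintype.card_fin, Finset.prod_const, nsmul_eq_mul]
  have h4 : ((4 ^ n : ℕ) : ℝ) = (2 ^ n : ℝ) ^ 2 := by
    push_cast
    rw [← pow_mul, mul_comm, pow_mul]; norm_num
  rw [h4]
  have : (2 ^ n : ℝ) ≠ 0 := by positivity
  field_simp
end

section
/- Multiplicativity of the stabilizer Rényi quantity under tensor products (equivalently, additivity of the α-Stabilizer Rényi Entropy): for natural numbers n, m, an integer α ≥ 1, and unit vectors ψ : (Fin n → Fin 2) → ℂ and ω : (Fin m → Fin 2) → ℂ, define the product state (ψ ⊗ ω) : (Fin n → Fin 2) × (Fin m → Fin 2) → ℂ by (ψ ⊗ ω)(a, b) = ψ a · ω b, and for pairs (s, t) : (Fin n → Fin 4) × (Fin m → Fin 4) the composite Pauli string P_{(s,t)} with entries P_{(s,t)} (a,b) (a',b') = P_s a a' · P_t b b'. Then (2^(n+m))⁻¹ · Σ over all (s,t) of (Re⟨ψ ⊗ ω, P_{(s,t)} (ψ ⊗ ω)⟩)^(2α) = A_α(ψ) · A_α(ω). -/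
open Complex Matrix BigOperators

lemma Q_star (a : Fin 4) (i j : Fin 2) : star (Q a i j) = Q a j i := by
  fin_cases a <;> fin_cases i <;> fin_cases j <;> simp [Q]

lemma P_isHermitian {n : ℕ} (s : Fin n → Fin 4) : (P s).IsHermitian := by
  ext i j
  simp only [Matrix.conjTranspose_apply, P, Matrix.of_apply, star_prod, Q_star]

lemma expect_im {n : ℕ} (s : Fin n → Fin 4) (ψ : (Fin n → Fin 2) → ℂ) :
    (star ψ ⬝ᵥ (P s).mulVec ψ).im = 0 := by
  have h : star (star ψ ⬝ᵥ (P s).mulVec ψ) = star ψ ⬝ᵥ (P s).mulVec ψ := by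
    rw [← Matrix.star_dotProduct_star, star_star, Matrix.star_mulVec,
      (P_isHermitian s).eq, Matrix.dotProduct_mulVec]
  exact Complex.conj_eq_iff_im.mp h

lemma expect_mul {ι κ : Type*} [Fintype ι] [Fintype κ] (M : Matrix ι ι ℂ) (N : Matrix κ κ ℂ)
    (ψ : ι → ℂ) (ω : κ → ℂ) :
    (star fun p : ι × κ => ψ p.1 * ω p.2) ⬝ᵥ
      (Matrix.of fun p q : ι × κ => M p.1 q.1 * N p.2 q.2).mulVec (fun p => ψ p.1 * ω p.2)
      = (star ψ ⬝ᵥ M.mulVec ψ) * (star ω ⬝ᵥ N.mulVec ω) := by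
  have h : ∀ p : ι × κ, (Matrix.of fun p q : ι × κ => M p.1 q.1 * N p.2 q.2).mulVec
      (fun p => ψ p.1 * ω p.2) p = M.mulVec ψ p.1 * N.mulVec ω p.2 := by
    intro p
    simp only [Matrix.mulVec, dotProduct, Matrix.of_apply]
    rw [Finset.sum_mul_sum, Fintype.sum_prod_type]
    exact Finset.sum_congr rfl fun _ _ => Finset.sum_congr rfl fun _ _ => by ring
  simp only [dotProduct, h]
  rw [Finset.sum_mul_sum, Fintype.sum_prod_type]
  refine Finset.sum_congr rfl fun _ _ => Finset.sum_congr rfl fun _ _ => ?_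
  simp only [Pi.star_apply, star_mul']
  ring

theorem A_multiplicative (n m α : ℕ) (hα : 1 ≤ α)
    (ψ : (Fin n → Fin 2) → ℂ) (hψ : star ψ ⬝ᵥ ψ = 1)
    (ω : (Fin m → Fin 2) → ℂ) (hω : star ω ⬝ᵥ ω = 1) :
    (2 ^ (n + m) : ℝ)⁻¹ * ∑ st : (Fin n → Fin 4) × (Fin m → Fin 4),
        ((star fun p : (Fin n → Fin 2) × (Fin m → Fin 2) => ψ p.1 * ω p.2) ⬝ᵥ
          (Matrix.of fun p q : (Fin n → Fin 2) × (Fin m → Fin 2) =>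
            P st.1 p.1 q.1 * P st.2 p.2 q.2).mulVec
          (fun p => ψ p.1 * ω p.2)).re ^ (2 * α)
      = A n α ψ * A m α ω := by
  simp only [expect_mul, Complex.mul_re, expect_im, mul_zero, sub_zero, mul_pow, A]
  rw [Fintype.sum_prod_type]
  dsimp only
  rw [← Finset.sum_mul_sum, pow_add, mul_inv]
  ring
end
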